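/- Fix K ≥ 1. Define multisets recursively by rmax_1 = {f^s(1)}, kmax_1 = ∅, and for 1 ≤ i < n: rmax_{i+1} = topK(K, {f^s(i+1)} + map (x ↦ x + f^m(i+1)) rmax_i) and kmax_{i+1} = topK(K, kmax_i + map (x ↦ x + f^e(i+1)) rmax_i). Then for every 1 ≤ i ≤ n, rmax_i = topK(K, {R(j,i) : 1 ≤ j ≤ i}) and kmax_i = topK(K, {F(s,e) : 1 ≤ s < e ≤ i}). In particular, the Structured Maximal Sums recurrence outputs kmax_n, the multiset of the K largest structured window scores over the entire video. (Correctness part of Theorem 1 of the paper.) -/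

import Mathlib

/-- `topK K S` is the multiset of the `min(K, |S|)` largest elements of `S`:
sort `S` in ascending order and keep the last `min(K, |S|)` elements. -/
noncomputable def topK (K : ℕ) (S : Multiset ℝ) : Multiset ℝ :=
  ((S.sort (· ≤ ·)).drop (Multiset.card S - K) : List ℝ)

/-- Incomplete-window score: `R fs fm j i = f^s(j) + ∑_{q=j+1}^{i} f^m(q)`. -/
def R (fs fm : ℕ → ℝ) (j i : ℕ) : ℝ :=
  fs j + ∑ q ∈ Finset.Icc (j + 1) i, fm q

/-- Structured score of the temporal window `(s, e)`:
`F(s,e) = f^s(s) + ∑_{t=s+1}^{e-1} f^m(t) + f^e(e)`. -/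
def Fscore (fs fm fe : ℕ → ℝ) (s e : ℕ) : ℝ :=
  fs s + ∑ t ∈ Finset.Icc (s + 1) (e - 1), fm t + fe e

/-- `Inc fs fm i` is the multiset `{R(j,i) : 1 ≤ j ≤ i}` of scores of the
incomplete windows ending at frame `i`. -/
def Inc (fs fm : ℕ → ℝ) (i : ℕ) : Multiset ℝ :=
  (Finset.Icc 1 i).val.map (fun j => R fs fm j i)

/-- `Win fs fm fe i` is the multiset `{F(s,e) : 1 ≤ s < e ≤ i}` of structured
scores of all temporal windows ending at or before frame `i`. -/
def Win (fs fm fe : ℕ → ℝ) (i : ℕ) : Multiset ℝ :=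
  (((Finset.Icc 1 i) ×ˢ (Finset.Icc 1 i)).filter (fun p => p.1 < p.2)).val.map
    (fun p => Fscore fs fm fe p.1 p.2)

theorem topK_unique (K : ℕ) (S T C : Multiset ℝ) (h : S = T + C)
    (hc : Multiset.card T = min K (Multiset.card S))
    (ho : ∀ c ∈ C, ∀ t ∈ T, c ≤ t) : topK K S = T := by
  have hs : S.sort (· ≤ ·) = C.sort (· ≤ ·) ++ T.sort (· ≤ ·) := by
    refine List.Perm.eq_of_pairwise (le := (· ≤ ·)) (fun a b _ _ => le_antisymm)
      (Multiset.pairwise_sort S (· ≤ ·)) ?_ ?_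
    · rw [List.pairwise_append]
      refine ⟨Multiset.pairwise_sort C (· ≤ ·), Multiset.pairwise_sort T (· ≤ ·), ?_⟩
      intro a ha b hb
      exact ho a (by simpa using ha) b (by simpa using hb)
    · rw [← Multiset.coe_eq_coe, ← Multiset.coe_add]
      simp only [Multiset.sort_eq]
      rw [h, add_comm]
  have hcard : Multiset.card S - K = (C.sort (· ≤ ·)).length := by
    rw [Multiset.length_sort]
    have := congrArg Multiset.card h
    rw [Multiset.card_add] at this
    omega
  unfold topK
  rw [hs, hcard, List.drop_left, Multiset.sort_eq]

theorem topK_spec (K : ℕ) (S : Multiset ℝ) : ∃ C, S = topK K S + C ∧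
    Multiset.card (topK K S) = min K (Multiset.card S) ∧
    ∀ c ∈ C, ∀ t ∈ topK K S, c ≤ t := by
  refine ⟨((S.sort (· ≤ ·)).take (Multiset.card S - K) : List ℝ), ?_, ?_, ?_⟩
  · unfold topK
    rw [add_comm, Multiset.coe_add, List.take_append_drop, Multiset.sort_eq]
  · unfold topK
    simp only [Multiset.coe_card, List.length_drop, Multiset.length_sort]
    omega
  · intro c hc t ht
    have hp := Multiset.pairwise_sort S (· ≤ ·)
    rw [← List.take_append_drop (Multiset.card S - K) (S.sort (· ≤ ·)),
      List.pairwise_append] at hp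
    exact hp.2.2 c hc t ht

theorem topK_add (K : ℕ) (A B : Multiset ℝ) : topK K (topK K A + B) = topK K (A + B) := by
  symm
  obtain ⟨C, hA, hTc, hTo⟩ := topK_spec K A
  obtain ⟨C', hA', hTc', hTo'⟩ := topK_spec K (topK K A + B)
  generalize topK K A = T at *
  generalize topK K (T + B) = T' at *
  have hcA := congrArg Multiset.card hA
  rw [Multiset.card_add] at hcA
  rw [Multiset.card_add] at hTc'
  refine topK_unique K _ T' (C' + C) ?_ ?_ ?_
  · rw [hA, ← add_assoc, ← hA', add_right_comm]
  · rw [Multiset.card_add]; omega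
  · intro c hc t' ht'
    rcases Multiset.mem_add.1 hc with hc | hc
    · exact hTo' c hc t' ht'
    by_contra! hlt
    have hpos : 0 < Multiset.card C := Multiset.card_pos_iff_exists_mem.2 ⟨c, hc⟩
    have h1 := congrArg (Multiset.filter (fun x => c ≤ x)) hA'
    rw [Multiset.filter_add, Multiset.filter_add,
      Multiset.filter_eq_self.2 (fun t ht => hTo c hc t ht),
      Multiset.filter_eq_nil (s := C') |>.2
        (fun x hx => not_le.2 ((hTo' x hx t' ht').trans_lt hlt))] at h1
    have h2 := congrArg Multiset.card h1
    simp only [Multiset.card_add, Multiset.card_zero] at h2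
    have h3 : Multiset.filter (fun x => c ≤ x) T' = T' :=
      Multiset.eq_of_le_of_card_le (Multiset.filter_le _ _) (by omega)
    exact absurd (Multiset.filter_eq_self.1 h3 t' ht') (not_le.2 hlt)

theorem topK_map (K : ℕ) (S : Multiset ℝ) (a : ℝ) :
    (topK K S).map (fun x => x + a) = topK K (S.map (fun x => x + a)) := by
  symm
  obtain ⟨C, h, hc, ho⟩ := topK_spec K S
  refine topK_unique K _ _ (C.map (fun x => x + a)) ?_ ?_ ?_
  · rw [← Multiset.map_add, ← h]
  · simpa using hc
  · intro c' hc' t' ht'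
    obtain ⟨c, hcC, rfl⟩ := Multiset.mem_map.1 hc'
    obtain ⟨t, htT, rfl⟩ := Multiset.mem_map.1 ht'
    have := ho c hcC t htT
    linarith

theorem Icc_succ_val (i : ℕ) :
    (Finset.Icc 1 (i + 1)).val = (i + 1) ::ₘ (Finset.Icc 1 i).val := by
  rw [← Finset.insert_Icc_right_eq_Icc_add_one (by omega)]
  exact Finset.insert_val_of_notMem (by simp)

theorem Inc_succ (fs fm : ℕ → ℝ) (i : ℕ) :
    Inc fs fm (i + 1) = fs (i + 1) ::ₘ (Inc fs fm i).map (fun x => x + fm (i + 1)) := by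
  unfold Inc
  rw [Icc_succ_val, Multiset.map_cons, Multiset.map_map]
  congr 1
  · simp [R]
  · refine Multiset.map_congr rfl fun j hj => ?_
    have hj : j ≤ i := (Finset.mem_Icc.1 hj).2
    simp only [R, Function.comp]
    rw [Finset.sum_Icc_succ_top (by omega), add_assoc]

theorem Win_succ (fs fm fe : ℕ → ℝ) (i : ℕ) :
    Win fs fm fe (i + 1) = Win fs fm fe i + (Inc fs fm i).map (fun x => x + fe (i + 1)) := by
  have hu : ((Finset.Icc 1 (i+1)) ×ˢ (Finset.Icc 1 (i+1))).filter (fun p => p.1 < p.2) =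
      (((Finset.Icc 1 i) ×ˢ (Finset.Icc 1 i)).filter (fun p => p.1 < p.2)).disjUnion
      ((Finset.Icc 1 i).map ⟨fun j => (j, i + 1), fun a b h => (Prod.mk.inj h).1⟩) (by
        rw [Finset.disjoint_left]
        rintro ⟨a, b⟩ h1 h2
        simp only [Finset.mem_filter, Finset.mem_product, Finset.mem_Icc, Finset.mem_map,
          Function.Embedding.coeFn_mk, Prod.mk.injEq] at h1 h2
        obtain ⟨j, hj, h3⟩ := h2
        have h4 : i + 1 = b := (Prod.mk.inj h3).2
        omega) := by
    ext ⟨a, b⟩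
    simp only [Finset.mem_filter, Finset.mem_product, Finset.mem_Icc, Finset.mem_map,
      Finset.mem_disjUnion, Function.Embedding.coeFn_mk, Prod.mk.injEq]
    constructor
    · intro h
      by_cases hb : b = i + 1
      · exact Or.inr ⟨a, by omega, by rw [hb]; rfl⟩
      · exact Or.inl (by omega)
    · rintro (h | ⟨j, hj, h3⟩)
      · omega
      · have h4 : j = a := (Prod.mk.inj h3).1
        have h5 : i + 1 = b := (Prod.mk.inj h3).2
        omega
  unfold Win Inc
  rw [hu, Finset.disjUnion_val, Multiset.map_add, Finset.map_val, Multiset.map_map,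
    Multiset.map_map]
  rfl

/-- Correctness of the Structured Maximal Sums recurrence (Theorem 1):
if `rmax` and `kmax` satisfy the SMS recurrence, then for every `1 ≤ i ≤ n`,
`rmax i` is the multiset of the K largest incomplete-window scores ending at
frame `i` and `kmax i` is the multiset of the K largest structured window
scores of windows ending at or before frame `i`; in particular `kmax n` is
the multiset of the K largest structured window scores of the whole video. -/
theorem sms_correct (n K : ℕ) (hK : 1 ≤ K) (fs fm fe : ℕ → ℝ)
    (rmax kmax : ℕ → Multiset ℝ)
    (hr1 : rmax 1 = {fs 1}) (hk1 : kmax 1 = 0)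
    (hstep : ∀ i, 1 ≤ i → i < n →
      rmax (i + 1) =
        topK K (fs (i + 1) ::ₘ (rmax i).map (fun x => x + fm (i + 1))) ∧
      kmax (i + 1) =
        topK K (kmax i + (rmax i).map (fun x => x + fe (i + 1)))) :
    ∀ i, 1 ≤ i → i ≤ n →
      rmax i = topK K (Inc fs fm i) ∧ kmax i = topK K (Win fs fm fe i) := by
  intro i hi
  induction i, hi using Nat.le_induction with
  | base =>
    intro _
    constructor
    · rw [hr1]
      symm
      refine topK_unique K _ _ 0 ?_ ?_ ?_
      · simp [Inc, R]
      · simp [Inc, hK]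
      · simp
    · rw [hk1]
      symm
      have hW : Win fs fm fe 1 = 0 := by simp [Win]
      rw [hW]
      exact topK_unique K _ _ 0 (by simp) (by simp) (by simp)
  | succ i hi ih =>
    intro hn
    obtain ⟨h1, h2⟩ := ih (by omega)
    obtain ⟨h3, h4⟩ := hstep i hi (by omega)
    constructor
    · rw [h3, h1, topK_map, Inc_succ, ← Multiset.singleton_add, add_comm, topK_add, add_comm,
        Multiset.singleton_add]
    · rw [h4, h2, h1, topK_map, topK_add, add_comm, topK_add, add_comm, Win_succ]
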